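/- arXiv:2305.12007 — 2 statements merged into one kernel-verified Lean document; each statement's English description precedes it below -/
import Mathlib

section
/- For all positive integers d and r, the Ramanujan sum c_d(r) equals the von Sterneck function: c_d(r) = (φ(d)/φ(d/g))·μ(d/g), where g = gcd(d,r). In particular c_d(r) is an integer. -/
/-- The Ramanujan sum `c_d(r)`: the sum of the `r`-th powers of all primitive
`d`-th roots of unity. -/
noncomputable def ramanujanSum (d r : ℕ) : ℂ :=
  ∑ m ∈ (Finset.range d).filter (fun m => Nat.gcd m d = 1),
    Complex.exp (2 * Real.pi * Complex.I * ((m : ℂ) * (r : ℂ) / (d : ℂ)))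

/-! Raising to the `r`-th power maps the primitive `d`-th roots of unity onto the primitive `n`-th
roots of unity, `n = d / gcd d r`. Indexing the roots by units modulo `d` and modulo `n`, this map
becomes the reduction homomorphism `(ℤ/d)ˣ → (ℤ/n)ˣ`, which is surjective, so all its fibres have
`φ d / φ n` elements. What remains is the sum of the primitive `n`-th roots of unity, which is `μ n`
by Möbius inversion, because the sum of all `n`-th roots of unity vanishes for `n > 1`. -/

open Finset ArithmeticFunction
open scoped ArithmeticFunction.Moebius

section Fibers

variable {G H : Type*} [Group G] [Fintype G] [Monoid H] [Fintype H] {ψ : G →* H}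

lemma card_fiber_eq_card_div_card [DecidableEq H] (hψ : Function.Surjective ψ) (h : H) :
    #{g | ψ g = h} = Fintype.card G / Fintype.card H := by
  have card_eq : Fintype.card G = Fintype.card H * #{g | ψ g = h} := by
    calc Fintype.card G = ∑ h' : H, #{g | ψ g = h'} :=
          card_eq_sum_card_fiberwise fun g _ ↦ mem_univ (ψ g)
      _ = ∑ _h' : H, #{g | ψ g = h} :=
          sum_congr rfl fun h' _ ↦ MonoidHom.card_fiber_eq_of_mem_range ψ (hψ h') (hψ h)
      _ = Fintype.card H * #{g | ψ g = h} := by rw [sum_const, card_univ, smul_eq_mul]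
  rw [card_eq, Nat.mul_div_cancel_left _ Fintype.card_pos]

lemma sum_comp_eq_card_div_card_nsmul_sum {M : Type*} [AddCommMonoid M]
    (hψ : Function.Surjective ψ) (f : H → M) :
    ∑ g, f (ψ g) = (Fintype.card G / Fintype.card H) • ∑ h, f h := by
  classical
  rw [sum_comp f ψ, image_univ_of_surjective hψ, smul_sum]
  exact sum_congr rfl fun h _ ↦ by rw [card_fiber_eq_card_div_card hψ]

end Fibers

lemma sum_coprime_eq_sum_units {M : Type*} [AddCommMonoid M] (n : ℕ) [NeZero n] (f : ℕ → M) :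
    ∑ m ∈ range n with m.Coprime n, f m = ∑ u : (ZMod n)ˣ, f (u : ZMod n).val := by
  symm
  refine sum_nbij (fun u ↦ (u : ZMod n).val) (fun u _ ↦ ?_) (fun u _ v _ huv ↦ ?_)
    (fun m hm ↦ ?_) fun _ _ ↦ rfl
  · exact mem_filter.2 ⟨mem_range.2 (ZMod.val_lt _), ZMod.val_coe_unit_coprime u⟩
  · exact Units.ext (ZMod.val_injective n huv)
  · obtain ⟨m_lt, m_coprime⟩ : m < n ∧ m.Coprime n := by simpa using hm
    exact ⟨ZMod.unitOfCoprime m m_coprime, mem_coe.2 (mem_univ _), by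
      simp [ZMod.val_natCast, Nat.mod_eq_of_lt m_lt]⟩

lemma sum_units_pow_eq_of_dvd {R : Type*} [Semiring R] {d n : ℕ} [NeZero d] [NeZero n]
    (hnd : n ∣ d) {ζ : R} (hζ : ζ ^ n = 1) :
    ∑ u : (ZMod d)ˣ, ζ ^ (u : ZMod d).val =
      (d.totient / n.totient : ℕ) * ∑ v : (ZMod n)ˣ, ζ ^ (v : ZMod n).val := by
  rw [← ZMod.card_units_eq_totient, ← ZMod.card_units_eq_totient, ← nsmul_eq_mul,
    ← sum_comp_eq_card_div_card_nsmul_sum (ZMod.unitsMap_surjective hnd)]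
  refine sum_congr rfl fun u _ ↦ ?_
  rw [ZMod.unitsMap_val, ZMod.cast_eq_val, ZMod.val_natCast]
  exact pow_eq_pow_mod _ hζ

lemma isPrimitiveRoot_pow_div_gcd {M : Type*} [CommMonoid M] {n : ℕ} [NeZero n] {ζ : M}
    (hζ : IsPrimitiveRoot ζ n) (r : ℕ) : IsPrimitiveRoot (ζ ^ r) (n / n.gcd r) := by
  rw [IsPrimitiveRoot.iff_orderOf, (hζ.isOfFinOrder (NeZero.ne n)).orderOf_pow, ← hζ.eq_orderOf]

section RootsOfUnity

variable {R : Type*} [CommRing R] [IsDomain R] {n : ℕ} {ζ : R}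

lemma sum_nthRootsFinset_one [NeZero n] (hζ : IsPrimitiveRoot ζ n) :
    ∑ x ∈ Polynomial.nthRootsFinset n (1 : R), x = if n = 1 then 1 else 0 := by
  have sum_eq_geom_sum :
      ∑ x ∈ Polynomial.nthRootsFinset n (1 : R), x = ∑ i ∈ range n, ζ ^ i := by
    classical
    rw [Finset.sum_eq_multiset_sum, Polynomial.nthRootsFinset_def, Multiset.toFinset_val,
      hζ.nthRoots_one_nodup.dedup, hζ.nthRoots_eq (one_pow n)]
    simp [Finset.sum]
  rw [sum_eq_geom_sum]
  split_ifs with hn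
  · simp [hn]
  · exact hζ.geom_sum_eq_zero (by have := NeZero.ne n; lia)

lemma sum_primitiveRoots_eq_sum_coprime {M : Type*} [AddCommMonoid M] [NeZero n]
    (hζ : IsPrimitiveRoot ζ n) (f : R → M) :
    ∑ x ∈ primitiveRoots n R, f x = ∑ m ∈ range n with m.Coprime n, f (ζ ^ m) := by
  symm
  refine sum_nbij (ζ ^ ·) (fun m hm ↦ ?_) (fun i hi j hj hij ↦ ?_) (fun x hx ↦ ?_) fun _ _ ↦ rfl
  · exact (mem_primitiveRoots (NeZero.pos n)).2 (hζ.pow_of_coprime m (mem_filter.1 hm).2)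
  · exact hζ.pow_inj (mem_range.1 (mem_filter.1 hi).1) (mem_range.1 (mem_filter.1 hj).1) hij
  · obtain ⟨m, m_lt, m_coprime, rfl⟩ :=
      hζ.isPrimitiveRoot_iff.1 (isPrimitiveRoot_of_mem_primitiveRoots hx)
    exact ⟨m, mem_coe.2 (mem_filter.2 ⟨mem_range.2 m_lt, m_coprime⟩), rfl⟩

lemma sum_primitiveRoots_eq_sum_units {M : Type*} [AddCommMonoid M] [NeZero n]
    (hζ : IsPrimitiveRoot ζ n) (f : R → M) :
    ∑ x ∈ primitiveRoots n R, f x = ∑ u : (ZMod n)ˣ, f (ζ ^ (u : ZMod n).val) := by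
  rw [sum_primitiveRoots_eq_sum_coprime hζ, sum_coprime_eq_sum_units n fun m ↦ f (ζ ^ m)]

lemma sum_divisors_sum_primitiveRoots {M : Type*} [AddCommMonoid M] (n : ℕ) (f : R → M) :
    ∑ d ∈ n.divisors, ∑ x ∈ primitiveRoots d R, f x =
      ∑ x ∈ Polynomial.nthRootsFinset n (1 : R), f x := by
  classical
  rw [IsPrimitiveRoot.nthRoots_one_eq_biUnion_primitiveRoots,
    sum_biUnion fun _ _ _ _ hab ↦ IsPrimitiveRoot.disjoint hab]

lemma sum_primitiveRoots_eq_moebius [NeZero n] (hζ : IsPrimitiveRoot ζ n) :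
    ∑ x ∈ primitiveRoots n R, x = (μ n : R) := by
  have sum_divisors_eq_one (m : ℕ) (m_pos : m > 0) (hmn : m ∈ {m | m ∣ n}) :
      ∑ d ∈ m.divisors, ∑ x ∈ primitiveRoots d R, x = (1 : ArithmeticFunction R) m := by
    have : NeZero m := ⟨m_pos.ne'⟩
    obtain ⟨k, rfl⟩ := hmn
    rw [sum_divisors_sum_primitiveRoots m fun x ↦ x,
      sum_nthRootsFinset_one (hζ.pow (NeZero.pos _) (mul_comm m k)), one_apply]
  rw [← (sum_eq_iff_sum_mul_moebius_eq_on {m | m ∣ n} fun _ _ ↦ Nat.dvd_trans).1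
    sum_divisors_eq_one n (NeZero.pos n) dvd_rfl]
  calc ∑ x ∈ n.divisorsAntidiagonal, (μ x.1 : R) * (1 : ArithmeticFunction R) x.2
      = ((μ : ArithmeticFunction R) * 1) n := by simp only [mul_apply, intCoe_apply]
    _ = (μ n : R) := by rw [mul_one, intCoe_apply]

theorem sum_primitiveRoots_pow [NeZero n] (hζ : IsPrimitiveRoot ζ n) (r : ℕ) :
    ∑ x ∈ primitiveRoots n R, x ^ r =
      (n.totient / (n / n.gcd r).totient : ℕ) * (μ (n / n.gcd r) : R) := by
  have hξ : IsPrimitiveRoot (ζ ^ r) (n / n.gcd r) := isPrimitiveRoot_pow_div_gcd hζ r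
  have hdvd : n / n.gcd r ∣ n := Nat.div_dvd_of_dvd (n.gcd_dvd_left r)
  have : NeZero (n / n.gcd r) := ⟨ne_zero_of_dvd_ne_zero (NeZero.ne n) hdvd⟩
  calc ∑ x ∈ primitiveRoots n R, x ^ r
      = ∑ u : (ZMod n)ˣ, (ζ ^ r) ^ (u : ZMod n).val := by
        simp only [sum_primitiveRoots_eq_sum_units hζ, pow_right_comm ζ r]
    _ = (n.totient / (n / n.gcd r).totient : ℕ) *
          ∑ v : (ZMod (n / n.gcd r))ˣ, (ζ ^ r) ^ (v : ZMod (n / n.gcd r)).val :=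
        sum_units_pow_eq_of_dvd hdvd hξ.pow_eq_one
    _ = (n.totient / (n / n.gcd r).totient : ℕ) * (μ (n / n.gcd r) : R) := by
        rw [← sum_primitiveRoots_eq_sum_units hξ fun x ↦ x, sum_primitiveRoots_eq_moebius hξ]

end RootsOfUnity

lemma ramanujanSum_eq_sum_primitiveRoots_pow (d r : ℕ) [NeZero d] :
    ramanujanSum d r = ∑ x ∈ primitiveRoots d ℂ, x ^ r := by
  rw [sum_primitiveRoots_eq_sum_coprime (Complex.isPrimitiveRoot_exp d (NeZero.ne d)) (· ^ r)]
  refine sum_congr rfl fun m _ ↦ ?_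
  rw [← pow_mul, ← Complex.exp_nat_mul]
  push_cast
  ring_nf

theorem stmt_0 (d r : ℕ) (hd : 0 < d) (hr : 0 < r) :
    ramanujanSum d r =
      ((Nat.totient d : ℂ) / (Nat.totient (d / Nat.gcd d r) : ℂ)) *
        (ArithmeticFunction.moebius (d / Nat.gcd d r) : ℂ) ∧
    ∃ z : ℤ, ramanujanSum d r = (z : ℂ) := by
  have : NeZero d := ⟨hd.ne'⟩
  have hdvd : d / d.gcd r ∣ d := Nat.div_dvd_of_dvd (d.gcd_dvd_left r)
  have totient_ne_zero : ((d / d.gcd r).totient : ℂ) ≠ 0 :=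
    Nat.cast_ne_zero.2 (Nat.totient_pos.2 (Nat.pos_of_dvd_of_pos hdvd hd)).ne'
  have sum_eq : ramanujanSum d r =
      (d.totient / (d / d.gcd r).totient : ℕ) * (μ (d / d.gcd r) : ℂ) := by
    rw [ramanujanSum_eq_sum_primitiveRoots_pow,
      sum_primitiveRoots_pow (Complex.isPrimitiveRoot_exp d hd.ne')]
  constructor
  · rw [sum_eq, Nat.cast_div (Nat.totient_dvd_of_dvd hdvd) totient_ne_zero]
  · exact ⟨(d.totient / (d / d.gcd r).totient : ℕ) * μ (d / d.gcd r), by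
      rw [sum_eq, Int.cast_mul, Int.cast_natCast]⟩
end

section
/- Let n ≥ 1 be even. Then ∑_{d|n} c_d(n/d)·(-1)^{n/d} equals m if n = m² is a perfect square; equals 2m if n = 2m² with m an odd positive integer (i.e. n/2 is an odd perfect square); and equals 0 otherwise. -/
/-! The Kluyver formula `c_d(r) = ∑_{ae = d, e ∣ r} μ(a) e` turns the sum over `dr = n` into a sum
over `aer = n`. Collecting the terms with the same `e`, the coefficient of `e` is the convolution of
`μ` with `b ↦ [e ∣ b] (-1)^b`, evaluated at `n / e`. By Möbius inversion it is supported on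
`n / e = e`, and for odd `e` also on `n / e = 2e`. -/

open Finset Polynomial
open scoped ArithmeticFunction.Moebius

section RootsOfUnity

variable {R : Type*} [CommRing R] [IsDomain R] {ζ : R} {d : ℕ}

theorem sum_nthRootsFinset_one_eq_sum_range {M : Type*} [AddCommMonoid M] [NeZero d]
    (hζ : IsPrimitiveRoot ζ d) (f : R → M) :
    ∑ z ∈ nthRootsFinset d (1 : R), f z = ∑ i ∈ range d, f (ζ ^ i) := by
  classical
  rw [nthRootsFinset_def, Finset.sum, Multiset.toFinset_val, hζ.nthRoots_one_nodup.dedup,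
    hζ.nthRoots_eq (one_pow d)]
  simp [Finset.sum]

theorem sum_pow_nthRootsFinset_one [NeZero d] (hζ : IsPrimitiveRoot ζ d) (r : ℕ) :
    ∑ z ∈ nthRootsFinset d (1 : R), z ^ r = if d ∣ r then (d : R) else 0 := by
  simp_rw [sum_nthRootsFinset_one_eq_sum_range hζ, pow_right_comm ζ _ r]
  split_ifs with hdr
  · simp [(hζ.pow_eq_one_iff_dvd r).2 hdr]
  · have hζr : ζ ^ r - 1 ≠ 0 := sub_ne_zero.2 (mt (hζ.pow_eq_one_iff_dvd r).1 hdr)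
    refine (mul_eq_zero.1 ?_).resolve_left hζr
    rw [mul_geom_sum, pow_right_comm, hζ.pow_eq_one, one_pow, sub_self]

theorem sum_divisors_sum_pow_primitiveRoots [NeZero d] (hζ : IsPrimitiveRoot ζ d) (r : ℕ) :
    ∑ i ∈ d.divisors, ∑ z ∈ primitiveRoots i R, z ^ r = if d ∣ r then (d : R) else 0 := by
  classical
  rw [← sum_pow_nthRootsFinset_one hζ, IsPrimitiveRoot.nthRoots_one_eq_biUnion_primitiveRoots,
    sum_biUnion fun _ _ _ _ hij => IsPrimitiveRoot.disjoint hij]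

end RootsOfUnity

section RamanujanSum

theorem ramanujanSum_eq_sum_primitiveRoots (d r : ℕ) :
    ramanujanSum d r = ∑ z ∈ primitiveRoots d ℂ, z ^ r := by
  rcases eq_or_ne d 0 with rfl | hd
  · simp [ramanujanSum]
  have hζ := Complex.isPrimitiveRoot_exp d hd
  have : NeZero d := ⟨hd⟩
  refine sum_bij (fun m _ => Complex.exp (2 * Real.pi * Complex.I / d) ^ m) ?_ ?_ ?_ ?_
  · intro m hm
    exact (mem_primitiveRoots hd.pos).2 (hζ.pow_of_coprime m (mem_filter.1 hm).2)
  · intro a ha b hb hab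
    exact hζ.pow_inj (mem_range.1 (mem_filter.1 ha).1) (mem_range.1 (mem_filter.1 hb).1) hab
  · intro z hz
    obtain ⟨m, hmd, hm, rfl⟩ := hζ.isPrimitiveRoot_iff.1 (isPrimitiveRoot_of_mem_primitiveRoots hz)
    exact ⟨m, mem_filter.2 ⟨mem_range.2 hmd, hm⟩, rfl⟩
  · intro m _
    rw [← pow_mul, ← Complex.exp_nat_mul]
    congr 1
    push_cast
    ring

theorem sum_divisors_ramanujanSum {d : ℕ} (hd : 0 < d) (r : ℕ) :
    ∑ i ∈ d.divisors, ramanujanSum i r = if d ∣ r then (d : ℂ) else 0 := by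
  have : NeZero d := ⟨hd.ne'⟩
  simp_rw [ramanujanSum_eq_sum_primitiveRoots]
  exact sum_divisors_sum_pow_primitiveRoots (Complex.isPrimitiveRoot_exp d hd.ne') r

theorem ramanujanSum_eq_sum_moebius {d : ℕ} (hd : 0 < d) (r : ℕ) :
    ramanujanSum d r =
      ∑ x ∈ d.divisorsAntidiagonal, (μ x.1 : ℂ) * if x.2 ∣ r then (x.2 : ℂ) else 0 :=
  (ArithmeticFunction.sum_eq_iff_sum_mul_moebius_eq.1
    (fun _ hn => sum_divisors_ramanujanSum hn r) d hd).symm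

end RamanujanSum

theorem sum_divisorsAntidiagonal_left_comm {M : Type*} [AddCommMonoid M] (n : ℕ)
    (f : ℕ → ℕ → ℕ → M) :
    ∑ x ∈ n.divisorsAntidiagonal, ∑ y ∈ x.1.divisorsAntidiagonal, f y.1 y.2 x.2 =
      ∑ x ∈ n.divisorsAntidiagonal, ∑ y ∈ x.2.divisorsAntidiagonal, f y.1 x.1 y.2 := by
  simp only [sum_sigma']
  refine sum_nbij' (fun ⟨⟨_, r⟩, ⟨a, e⟩⟩ ↦ ⟨(e, a * r), (a, r)⟩)
    (fun ⟨⟨e, _⟩, ⟨a, r⟩⟩ ↦ ⟨(a * e, r), (a, e)⟩) ?_ ?_ ?_ ?_ ?_ <;>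
  simp only [mem_sigma, Nat.mem_divisorsAntidiagonal] <;>
  grind

theorem sum_ramanujanSum_mul_eq_sum_moebius (f : ℕ → ℂ) (n : ℕ) :
    ∑ d ∈ n.divisors, ramanujanSum d (n / d) * f (n / d) =
      ∑ x ∈ n.divisorsAntidiagonal, (x.1 : ℂ) *
        ∑ y ∈ x.2.divisorsAntidiagonal, (μ y.1 : ℂ) * if x.1 ∣ y.2 then f y.2 else 0 := by
  calc ∑ d ∈ n.divisors, ramanujanSum d (n / d) * f (n / d)
    _ = ∑ x ∈ n.divisorsAntidiagonal, ramanujanSum x.1 x.2 * f x.2 :=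
      (Nat.sum_divisorsAntidiagonal fun d r => ramanujanSum d r * f r).symm
    _ = ∑ x ∈ n.divisorsAntidiagonal, ∑ y ∈ x.1.divisorsAntidiagonal,
          (μ y.1 : ℂ) * (if y.2 ∣ x.2 then (y.2 : ℂ) else 0) * f x.2 :=
      sum_congr rfl fun x hx => by
        rw [ramanujanSum_eq_sum_moebius (Nat.pos_of_ne_zero
          (Nat.left_ne_zero_of_mem_divisorsAntidiagonal hx)), sum_mul]
    _ = ∑ x ∈ n.divisorsAntidiagonal, ∑ y ∈ x.2.divisorsAntidiagonal,
          (μ y.1 : ℂ) * (if x.1 ∣ y.2 then (x.1 : ℂ) else 0) * f y.2 :=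
      sum_divisorsAntidiagonal_left_comm n fun a e r =>
        (μ a : ℂ) * (if e ∣ r then (e : ℂ) else 0) * f r
    _ = _ := by
      simp only [mul_sum]
      refine sum_congr rfl fun x _ => sum_congr rfl fun y _ => ?_
      split_ifs <;> ring

section NegOnePow

variable {R : Type*} [CommRing R]

theorem sum_divisors_ite_eq_add_ite_eq_two_mul (e : ℕ) {s : ℕ} (hs : 0 < s) :
    ∑ i ∈ s.divisors, ((if i = e then (-1 : R) ^ e else 0) + if Odd e ∧ i = 2 * e then 2 else 0) =
      if e ∣ s then (-1) ^ s else 0 := by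
  simp only [sum_add_distrib, ite_and, sum_ite_irrel, sum_ite_eq', sum_const_zero, Nat.mem_divisors,
    hs.ne', ne_eq, not_false_eq_true, and_true]
  by_cases hes : e ∣ s
  · rcases Nat.even_or_odd e with he | he
    · simp [hes, he, he.trans_dvd hes, Nat.not_odd_iff_even.2 he]
    · have two_mul_dvd_iff : 2 * e ∣ s ↔ Even s := by
        rw [even_iff_two_dvd]
        exact ⟨dvd_of_mul_right_dvd, fun h2s =>
          (Nat.coprime_two_left.2 he).mul_dvd_of_dvd_of_dvd h2s hes⟩
      rcases Nat.even_or_odd s with h | h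
      · norm_num [hes, he, two_mul_dvd_iff, h, hs.ne']
      · simp [hes, he, two_mul_dvd_iff, h, Nat.not_even_iff_odd.2 h]
  · simp [hes, mt dvd_of_mul_left_dvd hes]

theorem sum_moebius_mul_ite_dvd_neg_one_pow (e : ℕ) {s : ℕ} (hs : 0 < s) :
    ∑ x ∈ s.divisorsAntidiagonal, (μ x.1 : R) * (if e ∣ x.2 then (-1) ^ x.2 else 0) =
      (if s = e then (-1) ^ e else 0) + if Odd e ∧ s = 2 * e then 2 else 0 :=
  (ArithmeticFunction.sum_eq_iff_sum_mul_moebius_eq (R := R)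
    (f := fun s => (if s = e then (-1) ^ e else 0) + if Odd e ∧ s = 2 * e then 2 else 0)
    (g := fun s => if e ∣ s then (-1) ^ s else 0)).1
    (fun _ => sum_divisors_ite_eq_add_ite_eq_two_mul e) s hs

end NegOnePow

theorem div_eq_mul_iff_eq_mul_sq {e n : ℕ} (he : e ∈ n.divisors) (k : ℕ) :
    n / e = k * e ↔ n = k * e ^ 2 := by
  rw [Nat.div_eq_iff_eq_mul_left (Nat.pos_of_mem_divisors he) (Nat.dvd_of_mem_divisors he),
    mul_assoc, sq]

theorem sum_ramanujanSum_mul_neg_one_pow (n : ℕ) :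
    ∑ d ∈ n.divisors, ramanujanSum d (n / d) * (-1 : ℂ) ^ (n / d) =
      ∑ e ∈ n.divisors with n = e ^ 2, (-1) ^ e * (e : ℂ) +
        ∑ e ∈ n.divisors with Odd e ∧ n = 2 * e ^ 2, 2 * (e : ℂ) := by
  calc ∑ d ∈ n.divisors, ramanujanSum d (n / d) * (-1 : ℂ) ^ (n / d)
    _ = ∑ x ∈ n.divisorsAntidiagonal, (x.1 : ℂ) *
          ((if x.2 = x.1 then (-1) ^ x.1 else 0) + if Odd x.1 ∧ x.2 = 2 * x.1 then 2 else 0) := by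
      rw [sum_ramanujanSum_mul_eq_sum_moebius (fun r => (-1) ^ r)]
      refine sum_congr rfl fun x hx => ?_
      rw [sum_moebius_mul_ite_dvd_neg_one_pow x.1 (Nat.pos_of_ne_zero
        (Nat.right_ne_zero_of_mem_divisorsAntidiagonal hx))]
    _ = ∑ e ∈ n.divisors, (e : ℂ) *
          ((if n / e = e then (-1) ^ e else 0) + if Odd e ∧ n / e = 2 * e then 2 else 0) :=
      Nat.sum_divisorsAntidiagonal fun e s => (e : ℂ) *
        ((if s = e then (-1) ^ e else 0) + if Odd e ∧ s = 2 * e then 2 else 0)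
    _ = ∑ e ∈ n.divisors, ((if n = e ^ 2 then (-1) ^ e * (e : ℂ) else 0) +
          if Odd e ∧ n = 2 * e ^ 2 then 2 * (e : ℂ) else 0) :=
      sum_congr rfl fun e he => by
        have div_eq_self_iff : n / e = e ↔ n = e ^ 2 := by
          simpa only [one_mul] using div_eq_mul_iff_eq_mul_sq he 1
        simp only [div_eq_self_iff, div_eq_mul_iff_eq_mul_sq he 2, mul_comm (e : ℂ), add_mul,
          ite_mul, zero_mul]
    _ = _ := by rw [sum_add_distrib, sum_filter, sum_filter]

theorem sq_ne_two_mul_sq {m e : ℕ} (he : Odd e) : m ^ 2 ≠ 2 * e ^ 2 := by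
  intro h
  have hm : Even m := (Nat.even_pow.1 (h ▸ even_two_mul (e ^ 2))).1
  obtain ⟨k, rfl⟩ := hm
  have he2 : e ^ 2 = 2 * k ^ 2 := by linarith
  exact Nat.not_even_iff_odd.2 he.pow (he2 ▸ even_two_mul (k ^ 2))

theorem stmt_9_general (n : ℕ) (hn : 1 ≤ n) :
    (∀ m : ℕ, n = m ^ 2 →
      ∑ d ∈ n.divisors, ramanujanSum d (n / d) * (-1 : ℂ) ^ (n / d) = (-1) ^ m * (m : ℂ)) ∧
    (∀ m : ℕ, Odd m → n = 2 * m ^ 2 →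
      ∑ d ∈ n.divisors, ramanujanSum d (n / d) * (-1 : ℂ) ^ (n / d) = 2 * (m : ℂ)) ∧
    ((¬ ∃ m : ℕ, n = m ^ 2) → (¬ ∃ m : ℕ, Odd m ∧ n = 2 * m ^ 2) →
      ∑ d ∈ n.divisors, ramanujanSum d (n / d) * (-1 : ℂ) ^ (n / d) = 0) := by
  have hn0 : n ≠ 0 := Nat.one_le_iff_ne_zero.1 hn
  rw [sum_ramanujanSum_mul_neg_one_pow]
  refine ⟨?_, ?_, ?_⟩
  · rintro m rfl
    have squares : ({e ∈ (m ^ 2).divisors | m ^ 2 = e ^ 2} : Finset ℕ) = {m} :=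
      eq_singleton_iff_unique_mem.2
        ⟨mem_filter.2 ⟨Nat.mem_divisors.2 ⟨dvd_pow_self m two_ne_zero, hn0⟩, rfl⟩,
          fun e he => (Nat.pow_left_injective two_ne_zero (mem_filter.1 he).2).symm⟩
    have twice_odd_squares :
        ({e ∈ (m ^ 2).divisors | Odd e ∧ m ^ 2 = 2 * e ^ 2} : Finset ℕ) = ∅ :=
      filter_false_of_mem fun e _ he => sq_ne_two_mul_sq he.1 he.2
    rw [squares, twice_odd_squares, sum_singleton, sum_empty, add_zero]
  · rintro m hm rfl
    have squares : ({e ∈ (2 * m ^ 2).divisors | 2 * m ^ 2 = e ^ 2} : Finset ℕ) = ∅ :=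
      filter_false_of_mem fun e _ he => sq_ne_two_mul_sq hm he.symm
    have twice_odd_squares :
        ({e ∈ (2 * m ^ 2).divisors | Odd e ∧ 2 * m ^ 2 = 2 * e ^ 2} : Finset ℕ) = {m} :=
      eq_singleton_iff_unique_mem.2
        ⟨mem_filter.2 ⟨Nat.mem_divisors.2
            ⟨(dvd_pow_self m two_ne_zero).mul_left 2, hn0⟩, hm, rfl⟩,
          fun e he => (Nat.pow_left_injective two_ne_zero
            (Nat.mul_left_cancel two_pos (mem_filter.1 he).2.2)).symm⟩
    rw [squares, twice_odd_squares, sum_singleton, sum_empty, zero_add]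
  · intro not_square not_twice_odd_square
    rw [filter_false_of_mem fun e _ he => not_square ⟨e, he⟩,
      filter_false_of_mem fun e _ he => not_twice_odd_square ⟨e, he⟩, sum_empty, sum_empty,
      add_zero]

theorem stmt_9 (n : ℕ) (hn : 1 ≤ n) (heven : Even n) :
    (∀ m : ℕ, n = m ^ 2 →
      ∑ d ∈ n.divisors, ramanujanSum d (n / d) * (-1 : ℂ) ^ (n / d) = (m : ℂ)) ∧
    (∀ m : ℕ, 0 < m → Odd m → n = 2 * m ^ 2 →
      ∑ d ∈ n.divisors, ramanujanSum d (n / d) * (-1 : ℂ) ^ (n / d) = 2 * (m : ℂ)) ∧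
    ((¬ ∃ m : ℕ, n = m ^ 2) → (¬ ∃ m : ℕ, Odd m ∧ n = 2 * m ^ 2) →
      ∑ d ∈ n.divisors, ramanujanSum d (n / d) * (-1 : ℂ) ^ (n / d) = 0) := by
  obtain ⟨square, twice_odd_square, otherwise⟩ := stmt_9_general n hn
  refine ⟨fun m hm => ?_, fun m _ => twice_odd_square m, otherwise⟩
  rw [square m hm, (Nat.even_pow.1 (hm ▸ heven)).1.neg_one_pow, one_mul]
end
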